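/- Let Ω ⊆ ℝ³ be open, let α₁ : Ω → ℂ be continuously differentiable, let α₂, α₃ ∈ ℂ be constants, and set α(x) = α₁(x)e₁ + α₂e₂ + α₃e₃ and ∇α₁ = (∂₁α₁)e₁ + (∂₂α₁)e₂ + (∂₃α₁)e₃. Suppose v, w : Ω → ℍ(ℂ) are twice differentiable and satisfy the Schrödinger equations with quaternionic potentials −Δv − α²v + i(∇α₁)·v = 0 and −Δw − α²w − i(∇α₁)·w = 0 on Ω (quaternionic multiplication of ∇α₁ on the left). Then the function f := Du − uα, where u := ½ v(1 + ie₁) + ½ w(1 − ie₁), satisfies Df + fα = 0 on Ω. -/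

import Mathlib

noncomputable section

abbrev HC := Quaternion ℂ

def e1 : HC := ⟨0, 1, 0, 0⟩
def e2 : HC := ⟨0, 0, 1, 0⟩
def e3 : HC := ⟨0, 0, 0, 1⟩

def pd (k : Fin 3) (g : (Fin 3 → ℝ) → ℂ) (x : Fin 3 → ℝ) : ℂ :=
  fderiv ℝ g x (Pi.single k 1)

def lap (g : (Fin 3 → ℝ) → ℂ) (x : Fin 3 → ℝ) : ℂ :=
  pd 0 (pd 0 g) x + pd 1 (pd 1 g) x + pd 2 (pd 2 g) x

def pdq (k : Fin 3) (f : (Fin 3 → ℝ) → HC) (x : Fin 3 → ℝ) : HC :=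
  ⟨pd k (fun y => (f y).re) x, pd k (fun y => (f y).imI) x,
   pd k (fun y => (f y).imJ) x, pd k (fun y => (f y).imK) x⟩

def Dq (f : (Fin 3 → ℝ) → HC) (x : Fin 3 → ℝ) : HC :=
  e1 * pdq 0 f x + e2 * pdq 1 f x + e3 * pdq 2 f x

def lapq (f : (Fin 3 → ℝ) → HC) (x : Fin 3 → ℝ) : HC :=
  ⟨lap (fun y => (f y).re) x, lap (fun y => (f y).imI) x,
   lap (fun y => (f y).imJ) x, lap (fun y => (f y).imK) x⟩

def QDiffOn (f : (Fin 3 → ℝ) → HC) (Ω : Set (Fin 3 → ℝ)) : Prop :=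
  DifferentiableOn ℝ (fun y => (f y).re) Ω ∧ DifferentiableOn ℝ (fun y => (f y).imI) Ω ∧
  DifferentiableOn ℝ (fun y => (f y).imJ) Ω ∧ DifferentiableOn ℝ (fun y => (f y).imK) Ω

def QC2On (f : (Fin 3 → ℝ) → HC) (Ω : Set (Fin 3 → ℝ)) : Prop :=
  ContDiffOn ℝ 2 (fun y => (f y).re) Ω ∧ ContDiffOn ℝ 2 (fun y => (f y).imI) Ω ∧
  ContDiffOn ℝ 2 (fun y => (f y).imJ) Ω ∧ ContDiffOn ℝ 2 (fun y => (f y).imK) Ω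


/-- Build a biquaternion from its four complex components. -/
def quat (a b c d : ℂ) : HC := ⟨a, b, c, d⟩

/-! Right multiplication by `α` gives the factorization
`(D + M^α) (D - M^α) u = -Δu - u α² - ∑ₖ eₖ u ∂ₖα`.
When only `α₁` varies, the last sum is `(∇α₁) u e₁`. The projection `½ (1 + c e₁)` with `c² = -1` is
an eigenvector of right multiplication by `e₁`, with eigenvalue `-c`, so on multiples of it the
equation becomes `-Δu - α² u + c (∇α₁) u = 0`; the choices `c = ± i` are `Q^±`. -/

open Filter
open scoped Quaternion Topology

attribute [simps] e1 e2 e3 quat pdq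

section ScalarCalculus

variable {g h : (Fin 3 → ℝ) → ℂ} {x : Fin 3 → ℝ}

theorem pd_const (k : Fin 3) (c : ℂ) (x : Fin 3 → ℝ) : pd k (fun _ => c) x = 0 := by
  simp [pd]

theorem pd_add (k : Fin 3) (hg : DifferentiableAt ℝ g x) (hh : DifferentiableAt ℝ h x) :
    pd k (fun y => g y + h y) x = pd k g x + pd k h x := by
  simp [pd, fderiv_fun_add hg hh]

theorem pd_sub (k : Fin 3) (hg : DifferentiableAt ℝ g x) (hh : DifferentiableAt ℝ h x) :
    pd k (fun y => g y - h y) x = pd k g x - pd k h x := by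
  simp [pd, fderiv_fun_sub hg hh]

theorem pd_mul (k : Fin 3) (hg : DifferentiableAt ℝ g x) (hh : DifferentiableAt ℝ h x) :
    pd k (fun y => g y * h y) x = g x * pd k h x + h x * pd k g x := by
  simp [pd, fderiv_fun_mul hg hh]

theorem pd_congr (k : Fin 3) (hgh : g =ᶠ[𝓝 x] h) : pd k g x = pd k h x := by
  simp [pd, hgh.fderiv_eq]

theorem differentiableAt_fderiv_of_pd (hg : ∀ k, DifferentiableAt ℝ (pd k g) x) :
    DifferentiableAt ℝ (fderiv ℝ g) x := by
  have fderiv_eq : fderiv ℝ g =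
      fun y => ∑ k, (ContinuousLinearMap.proj k : (Fin 3 → ℝ) →L[ℝ] ℝ).smulRight (pd k g y) := by
    funext y
    ext d
    have d_eq : d = ∑ k, d k • Pi.single k 1 := pi_eq_sum_univ' d
    conv_lhs => rw [d_eq, map_sum]
    simp [pd]
  rw [fderiv_eq]
  fun_prop

theorem pd_comm (j k : Fin 3) (hg : ∀ᶠ y in 𝓝 x, DifferentiableAt ℝ g y)
    (hg' : ∀ k, DifferentiableAt ℝ (pd k g) x) : pd j (pd k g) x = pd k (pd j g) x := by
  have hg'' := differentiableAt_fderiv_of_pd hg'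
  have pd_pd (m n : Fin 3) :
      pd m (pd n g) x = fderiv ℝ (fderiv ℝ g) x (Pi.single m 1) (Pi.single n 1) := by
    change fderiv ℝ (fun y => fderiv ℝ g y (Pi.single n 1)) x (Pi.single m 1) = _
    simp [fderiv_clm_apply hg'' (differentiableAt_const _)]
  rw [pd_pd, pd_pd]
  exact second_derivative_symmetric_of_eventually (hg.mono fun y hy => hy.hasFDerivAt)
    hg''.hasFDerivAt _ _

end ScalarCalculus

/-- Real differentiability at a point of a biquaternion-valued function. It is stated by components,
since `Quaternion ℂ` carries no norm in Mathlib. -/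
structure QDiffAt (f : (Fin 3 → ℝ) → HC) (x : Fin 3 → ℝ) : Prop where
  re : DifferentiableAt ℝ (fun y => (f y).re) x
  imI : DifferentiableAt ℝ (fun y => (f y).imI) x
  imJ : DifferentiableAt ℝ (fun y => (f y).imJ) x
  imK : DifferentiableAt ℝ (fun y => (f y).imK) x

/-- Twice differentiability at a point of a biquaternion-valued function: no continuity of the
second derivatives is required. -/
structure QTwiceDiffAt (f : (Fin 3 → ℝ) → HC) (x : Fin 3 → ℝ) : Prop where
  eventually_qDiffAt : ∀ᶠ y in 𝓝 x, QDiffAt f y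
  qDiffAt_pdq : ∀ k, QDiffAt (pdq k f) x

section FirstOrder

variable {f g : (Fin 3 → ℝ) → HC} {x : Fin 3 → ℝ}

namespace QDiffAt

theorem const (c : HC) (x : Fin 3 → ℝ) : QDiffAt (fun _ => c) x := by
  constructor <;> fun_prop

theorem add (hf : QDiffAt f x) (hg : QDiffAt g x) : QDiffAt (fun y => f y + g y) x :=
  ⟨hf.re.add hg.re, hf.imI.add hg.imI, hf.imJ.add hg.imJ, hf.imK.add hg.imK⟩

theorem mul (hf : QDiffAt f x) (hg : QDiffAt g x) : QDiffAt (fun y => f y * g y) x := by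
  obtain ⟨hf0, hf1, hf2, hf3⟩ := hf
  obtain ⟨hg0, hg1, hg2, hg3⟩ := hg
  constructor <;>
    simp only [Quaternion.re_mul, Quaternion.imI_mul, Quaternion.imJ_mul, Quaternion.imK_mul] <;>
    fun_prop

theorem congr_of_eventuallyEq (hf : QDiffAt f x) (hgf : g =ᶠ[𝓝 x] f) : QDiffAt g x :=
  ⟨hf.re.congr_of_eventuallyEq (hgf.fun_comp _), hf.imI.congr_of_eventuallyEq (hgf.fun_comp _),
    hf.imJ.congr_of_eventuallyEq (hgf.fun_comp _), hf.imK.congr_of_eventuallyEq (hgf.fun_comp _)⟩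

end QDiffAt

theorem pdq_const (k : Fin 3) (c : HC) (x : Fin 3 → ℝ) : pdq k (fun _ => c) x = 0 := by
  ext <;> simp [pd_const]

theorem pdq_add (k : Fin 3) (hf : QDiffAt f x) (hg : QDiffAt g x) :
    pdq k (fun y => f y + g y) x = pdq k f x + pdq k g x := by
  ext
  · exact pd_add k hf.re hg.re
  · exact pd_add k hf.imI hg.imI
  · exact pd_add k hf.imJ hg.imJ
  · exact pd_add k hf.imK hg.imK

theorem pdq_sub (k : Fin 3) (hf : QDiffAt f x) (hg : QDiffAt g x) :
    pdq k (fun y => f y - g y) x = pdq k f x - pdq k g x := by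
  ext
  · exact pd_sub k hf.re hg.re
  · exact pd_sub k hf.imI hg.imI
  · exact pd_sub k hf.imJ hg.imJ
  · exact pd_sub k hf.imK hg.imK

theorem pdq_mul (k : Fin 3) (hf : QDiffAt f x) (hg : QDiffAt g x) :
    pdq k (fun y => f y * g y) x = pdq k f x * g x + f x * pdq k g x := by
  obtain ⟨hf0, hf1, hf2, hf3⟩ := hf
  obtain ⟨hg0, hg1, hg2, hg3⟩ := hg
  ext <;>
    simp only [re_pdq, imI_pdq, imJ_pdq, imK_pdq, Quaternion.re_mul, Quaternion.imI_mul,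
      Quaternion.imJ_mul, Quaternion.imK_mul, Quaternion.re_add, Quaternion.imI_add,
      Quaternion.imJ_add, Quaternion.imK_add] <;>
    simp (disch := fun_prop) only [pd_add, pd_sub, pd_mul] <;>
    ring

theorem pdq_const_mul (k : Fin 3) (c : HC) (hf : QDiffAt f x) :
    pdq k (fun y => c * f y) x = c * pdq k f x := by
  simp [pdq_mul k (.const c x) hf, pdq_const]

theorem pdq_mul_const (k : Fin 3) (hf : QDiffAt f x) (c : HC) :
    pdq k (fun y => f y * c) x = pdq k f x * c := by
  simp [pdq_mul k hf (.const c x), pdq_const]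

theorem pdq_congr (k : Fin 3) (hfg : f =ᶠ[𝓝 x] g) : pdq k f x = pdq k g x := by
  ext <;> exact pd_congr k (hfg.fun_comp _)

theorem Dq_sub (hf : QDiffAt f x) (hg : QDiffAt g x) :
    Dq (fun y => f y - g y) x = Dq f x - Dq g x := by
  simp only [Dq, pdq_sub _ hf hg, mul_sub]
  abel

theorem Dq_mul (hf : QDiffAt f x) (hg : QDiffAt g x) :
    Dq (fun y => f y * g y) x = Dq f x * g x +
      (e1 * f x * pdq 0 g x + e2 * f x * pdq 1 g x + e3 * f x * pdq 2 g x) := by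
  simp only [Dq, pdq_mul _ hf hg]
  noncomm_ring

end FirstOrder

section SecondOrder

variable {f g : (Fin 3 → ℝ) → HC} {x : Fin 3 → ℝ}

theorem pdq_comm (j k : Fin 3) (hf : QTwiceDiffAt f x) :
    pdq j (pdq k f) x = pdq k (pdq j f) x := by
  obtain ⟨hf, hf'⟩ := hf
  ext
  · exact pd_comm j k (hf.mono fun y hy => hy.re) fun k => (hf' k).re
  · exact pd_comm j k (hf.mono fun y hy => hy.imI) fun k => (hf' k).imI
  · exact pd_comm j k (hf.mono fun y hy => hy.imJ) fun k => (hf' k).imJ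
  · exact pd_comm j k (hf.mono fun y hy => hy.imK) fun k => (hf' k).imK

theorem lapq_eq_sum_pdq_pdq (f : (Fin 3 → ℝ) → HC) (x : Fin 3 → ℝ) :
    lapq f x = ∑ k, pdq k (pdq k f) x := by
  rw [Fin.sum_univ_three]
  rfl

theorem pdq_Dq (j : Fin 3) (hf : ∀ k, QDiffAt (pdq k f) x) :
    pdq j (Dq f) x =
      e1 * pdq j (pdq 0 f) x + e2 * pdq j (pdq 1 f) x + e3 * pdq j (pdq 2 f) x := by
  have h (e : HC) (k : Fin 3) : QDiffAt (fun y => e * pdq k f y) x := (QDiffAt.const e x).mul (hf k)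
  change pdq j (fun y => e1 * pdq 0 f y + e2 * pdq 1 f y + e3 * pdq 2 f y) x = _
  rw [pdq_add j ((h e1 0).add (h e2 1)) (h e3 2), pdq_add j (h e1 0) (h e2 1),
    pdq_const_mul j e1 (hf 0), pdq_const_mul j e2 (hf 1), pdq_const_mul j e3 (hf 2)]

theorem Dq_Dq (hf : QTwiceDiffAt f x) : Dq (Dq f) x = -lapq f x := by
  rw [Dq, pdq_Dq 0 hf.qDiffAt_pdq, pdq_Dq 1 hf.qDiffAt_pdq, pdq_Dq 2 hf.qDiffAt_pdq,
    pdq_comm 1 0 hf, pdq_comm 2 0 hf, pdq_comm 2 1 hf, lapq_eq_sum_pdq_pdq, Fin.sum_univ_three]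
  ext <;> simp <;> ring

namespace QTwiceDiffAt

theorem qDiffAt (hf : QTwiceDiffAt f x) : QDiffAt f x :=
  hf.eventually_qDiffAt.self_of_nhds

theorem qDiffAt_Dq (hf : QTwiceDiffAt f x) : QDiffAt (Dq f) x :=
  (((QDiffAt.const e1 x).mul (hf.qDiffAt_pdq 0)).add
    ((QDiffAt.const e2 x).mul (hf.qDiffAt_pdq 1))).add
    ((QDiffAt.const e3 x).mul (hf.qDiffAt_pdq 2))

theorem pdq_add_eventuallyEq (k : Fin 3) (hf : QTwiceDiffAt f x) (hg : QTwiceDiffAt g x) :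
    pdq k (fun y => f y + g y) =ᶠ[𝓝 x] fun y => pdq k f y + pdq k g y := by
  filter_upwards [hf.eventually_qDiffAt, hg.eventually_qDiffAt] with y hfy hgy
    using pdq_add k hfy hgy

theorem pdq_mul_const_eventuallyEq (k : Fin 3) (hf : QTwiceDiffAt f x) (c : HC) :
    pdq k (fun y => f y * c) =ᶠ[𝓝 x] fun y => pdq k f y * c := by
  filter_upwards [hf.eventually_qDiffAt] with y hfy using pdq_mul_const k hfy c

theorem add (hf : QTwiceDiffAt f x) (hg : QTwiceDiffAt g x) :
    QTwiceDiffAt (fun y => f y + g y) x where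
  eventually_qDiffAt := by
    filter_upwards [hf.eventually_qDiffAt, hg.eventually_qDiffAt] with y hfy hgy using hfy.add hgy
  qDiffAt_pdq k := ((hf.qDiffAt_pdq k).add (hg.qDiffAt_pdq k)).congr_of_eventuallyEq
    (hf.pdq_add_eventuallyEq k hg)

theorem mul_const (hf : QTwiceDiffAt f x) (c : HC) : QTwiceDiffAt (fun y => f y * c) x where
  eventually_qDiffAt := hf.eventually_qDiffAt.mono fun y hfy => hfy.mul (.const c y)
  qDiffAt_pdq k := ((hf.qDiffAt_pdq k).mul (.const c x)).congr_of_eventuallyEq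
    (hf.pdq_mul_const_eventuallyEq k c)

end QTwiceDiffAt

theorem lapq_add (hf : QTwiceDiffAt f x) (hg : QTwiceDiffAt g x) :
    lapq (fun y => f y + g y) x = lapq f x + lapq g x := by
  simp only [lapq_eq_sum_pdq_pdq, ← Finset.sum_add_distrib]
  refine Finset.sum_congr rfl fun k _ => ?_
  rw [pdq_congr k (hf.pdq_add_eventuallyEq k hg), pdq_add k (hf.qDiffAt_pdq k) (hg.qDiffAt_pdq k)]

theorem lapq_mul_const (hf : QTwiceDiffAt f x) (c : HC) :
    lapq (fun y => f y * c) x = lapq f x * c := by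
  simp only [lapq_eq_sum_pdq_pdq, Finset.sum_mul]
  refine Finset.sum_congr rfl fun k _ => ?_
  rw [pdq_congr k (hf.pdq_mul_const_eventuallyEq k c), pdq_mul_const k (hf.qDiffAt_pdq k)]

theorem Dq_sub_mul_add_mul {u α : (Fin 3 → ℝ) → HC} (hu : QTwiceDiffAt u x) (hα : QDiffAt α x) :
    Dq (fun y => Dq u y - u y * α y) x + (Dq u x - u x * α x) * α x =
      -lapq u x - u x * (α x * α x) -
        (e1 * u x * pdq 0 α x + e2 * u x * pdq 1 α x + e3 * u x * pdq 2 α x) := by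
  rw [Dq_sub hu.qDiffAt_Dq (hu.qDiffAt.mul hα), Dq_Dq hu, Dq_mul hu.qDiffAt hα, sub_mul,
    mul_assoc (u x)]
  abel

end SecondOrder

theorem differentiableAt_pd_of_contDiffAt (k : Fin 3) {g : (Fin 3 → ℝ) → ℂ} {x : Fin 3 → ℝ}
    (hg : ContDiffAt ℝ 2 g x) : DifferentiableAt ℝ (pd k g) x :=
  ((hg.fderiv_right (m := 1) (by norm_num)).differentiableAt one_ne_zero).clm_apply
    (differentiableAt_const _)

theorem QC2On.qTwiceDiffAt {f : (Fin 3 → ℝ) → HC} {Ω : Set (Fin 3 → ℝ)} (hf : QC2On f Ω)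
    (hΩ : IsOpen Ω) {x : Fin 3 → ℝ} (hx : x ∈ Ω) : QTwiceDiffAt f x := by
  obtain ⟨hre, hI, hJ, hK⟩ := hf
  have differentiableAt {g : (Fin 3 → ℝ) → ℂ} (hg : ContDiffOn ℝ 2 g Ω) {y : Fin 3 → ℝ}
      (hy : y ∈ Ω) : DifferentiableAt ℝ g y :=
    (hg.contDiffAt (hΩ.mem_nhds hy)).differentiableAt two_ne_zero
  have differentiableAt_pd (k : Fin 3) {g : (Fin 3 → ℝ) → ℂ} (hg : ContDiffOn ℝ 2 g Ω) :
      DifferentiableAt ℝ (pd k g) x :=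
    differentiableAt_pd_of_contDiffAt k (hg.contDiffAt (hΩ.mem_nhds hx))
  exact
    { eventually_qDiffAt := by
        filter_upwards [hΩ.mem_nhds hx] with y hy
        exact ⟨differentiableAt hre hy, differentiableAt hI hy, differentiableAt hJ hy,
          differentiableAt hK hy⟩
      qDiffAt_pdq := fun k => ⟨differentiableAt_pd k hre, differentiableAt_pd k hI,
        differentiableAt_pd k hJ, differentiableAt_pd k hK⟩ }

theorem quat_zero_mul_self (a b c : ℂ) :
    quat 0 a b c * quat 0 a b c = ((-(a ^ 2 + b ^ 2 + c ^ 2) : ℂ) : HC) := by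
  ext <;> simp [-Quaternion.coe_neg] <;> ring

/-- The biquaternion `∇a = (∂₁a) e₁ + (∂₂a) e₂ + (∂₃a) e₃`. -/
def gradq (a : (Fin 3 → ℝ) → ℂ) (x : Fin 3 → ℝ) : HC :=
  quat 0 (pd 0 a x) (pd 1 a x) (pd 2 a x)

theorem Dq_sub_mul_quat_add_mul_quat {u : (Fin 3 → ℝ) → HC} {a : (Fin 3 → ℝ) → ℂ}
    {x : Fin 3 → ℝ} (hu : QTwiceDiffAt u x) (ha : DifferentiableAt ℝ a x) (b c : ℂ) :
    Dq (fun y => Dq u y - u y * quat 0 (a y) b c) x +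
        (Dq u x - u x * quat 0 (a x) b c) * quat 0 (a x) b c =
      -lapq u x - ((-(a x ^ 2 + b ^ 2 + c ^ 2) : ℂ) : HC) * u x - gradq a x * u x * e1 := by
  have hα : QDiffAt (fun y => quat 0 (a y) b c) x :=
    ⟨differentiableAt_const _, ha, differentiableAt_const _, differentiableAt_const _⟩
  have pdq_α (k : Fin 3) : pdq k (fun y => quat 0 (a y) b c) x = quat 0 (pd k a x) 0 0 := by
    ext <;> simp [pd_const]
  have sum_eq : e1 * u x * quat 0 (pd 0 a x) 0 0 + e2 * u x * quat 0 (pd 1 a x) 0 0 +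
      e3 * u x * quat 0 (pd 2 a x) 0 0 = gradq a x * u x * e1 := by
    ext <;> simp [gradq] <;> ring
  rw [Dq_sub_mul_add_mul hu hα, pdq_α, pdq_α, pdq_α, sum_eq, quat_zero_mul_self,
    Quaternion.coe_commutes]

/-- The biquaternion `½ (1 + c e₁)`. Right multiplication by it is the projection `Q⁺` for `c = i`
and `Q⁻` for `c = -i`. -/
def projE1 (c : ℂ) : HC := (2⁻¹ : ℂ) • (1 + (c : HC) * e1)

theorem projE1_mul_e1 {c : ℂ} (hc : c ^ 2 = -1) : projE1 c * e1 = projE1 c * ((-c : ℂ) : HC) := by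
  ext <;> simp [projE1, -Quaternion.coe_neg]
  linear_combination 2⁻¹ * hc

theorem mul_projE1_of_schroedinger {v : (Fin 3 → ℝ) → HC} {x : Fin 3 → ℝ} {c s : ℂ} {p : HC}
    (hv : QTwiceDiffAt v x) (hc : c ^ 2 = -1)
    (hveq : -lapq v x - (s : HC) * v x + (c : HC) * (p * v x) = 0) :
    -lapq (fun y => v y * projE1 c) x - (s : HC) * (v x * projE1 c) -
      p * (v x * projE1 c) * e1 = 0 := by
  have eigen : p * (v x * projE1 c) * e1 = -((c : HC) * (p * v x) * projE1 c) := by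
    calc
      _ = p * v x * projE1 c * ((-c : ℂ) : HC) := by
        simp only [mul_assoc, projE1_mul_e1 hc]
      _ = ((-c : ℂ) : HC) * (p * v x * projE1 c) := (Quaternion.coe_commutes _ _).symm
      _ = -((c : HC) * (p * v x * projE1 c)) := by
        rw [Quaternion.coe_neg]
        exact neg_mul _ _
      _ = _ := by rw [mul_assoc (c : HC)]
  have neg_lapq : -lapq (fun y => v y * projE1 c) x = -lapq v x * projE1 c := by
    rw [lapq_mul_const hv]
    exact (neg_mul (lapq v x) (projE1 c)).symm
  calc
    _ = (-lapq v x - (s : HC) * v x + (c : HC) * (p * v x)) * projE1 c := by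
      rw [neg_lapq, eigen, sub_neg_eq_add, add_mul, sub_mul, mul_assoc (s : HC)]
    _ = 0 := by rw [hveq, zero_mul]

theorem solutions_from_quaternionic_schroedinger_general
    {a1 : (Fin 3 → ℝ) → ℂ} {a2 a3 : ℂ} {v w : (Fin 3 → ℝ) → HC} {x : Fin 3 → ℝ}
    (ha1 : DifferentiableAt ℝ a1 x) (hv : QTwiceDiffAt v x) (hw : QTwiceDiffAt w x)
    (hveq : -lapq v x - ((-(a1 x ^ 2 + a2 ^ 2 + a3 ^ 2) : ℂ) : HC) * v x +
      (Complex.I : HC) * (gradq a1 x * v x) = 0)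
    (hweq : -lapq w x - ((-(a1 x ^ 2 + a2 ^ 2 + a3 ^ 2) : ℂ) : HC) * w x -
      (Complex.I : HC) * (gradq a1 x * w x) = 0) :
    let α : (Fin 3 → ℝ) → HC := fun y => quat 0 (a1 y) a2 a3
    let u : (Fin 3 → ℝ) → HC := fun y =>
      (2⁻¹ : ℂ) • (v y * (1 + (Complex.I : HC) * e1)) +
      (2⁻¹ : ℂ) • (w y * (1 - (Complex.I : HC) * e1))
    let f : (Fin 3 → ℝ) → HC := fun y => Dq u y - u y * α y
    Dq f x + f x * α x = 0 := by
  intro α u _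
  have u_eq : u = fun y => v y * projE1 Complex.I + w y * projE1 (-Complex.I) := by
    funext y
    ext <;> simp [u, projE1] <;> ring
  have hvQ := hv.mul_const (projE1 Complex.I)
  have hwQ := hw.mul_const (projE1 (-Complex.I))
  have hveqQ := mul_projE1_of_schroedinger hv Complex.I_sq hveq
  have hweq' : -lapq w x - ((-(a1 x ^ 2 + a2 ^ 2 + a3 ^ 2) : ℂ) : HC) * w x +
      ((-Complex.I : ℂ) : HC) * (gradq a1 x * w x) = 0 := by
    rw [← hweq, sub_eq_add_neg _ ((Complex.I : HC) * _), Quaternion.coe_neg Complex.I]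
    exact congrArg _ (neg_mul _ _)
  have hweqQ := mul_projE1_of_schroedinger hw (by simp) hweq'
  calc
    _ = -lapq u x - ((-(a1 x ^ 2 + a2 ^ 2 + a3 ^ 2) : ℂ) : HC) * u x - gradq a1 x * u x * e1 :=
      Dq_sub_mul_quat_add_mul_quat (u_eq ▸ hvQ.add hwQ) ha1 a2 a3
    _ = (-lapq (fun y => v y * projE1 Complex.I) x -
            ((-(a1 x ^ 2 + a2 ^ 2 + a3 ^ 2) : ℂ) : HC) * (v x * projE1 Complex.I) -
            gradq a1 x * (v x * projE1 Complex.I) * e1) +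
          (-lapq (fun y => w y * projE1 (-Complex.I)) x -
            ((-(a1 x ^ 2 + a2 ^ 2 + a3 ^ 2) : ℂ) : HC) * (w x * projE1 (-Complex.I)) -
            gradq a1 x * (w x * projE1 (-Complex.I)) * e1) := by
      rw [u_eq, lapq_add hvQ hwQ]
      simp only [mul_add, add_mul]
      abel
    _ = 0 := by rw [hveqQ, hweqQ, add_zero]

/-- Proposition of Subsection 4.2: if `v` and `w` solve the Schrödinger
equations with quaternionic potentials `−Δv − α²v + i(∇α₁)v = 0` and
`−Δw − α²w − i(∇α₁)w = 0`, then `f = Du − uα` with `u = Q⁺v + Q⁻w` solves `Df + fα = 0`. -/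
theorem solutions_from_quaternionic_schroedinger
    (Ω : Set (Fin 3 → ℝ)) (hΩ : IsOpen Ω)
    (a1 : (Fin 3 → ℝ) → ℂ) (ha1 : ContDiffOn ℝ 1 a1 Ω)
    (a2 a3 : ℂ)
    (v w : (Fin 3 → ℝ) → HC) (hv : QC2On v Ω) (hw : QC2On w Ω)
    (hveq : ∀ x ∈ Ω,
      -lapq v x - ((-(a1 x ^ 2 + a2 ^ 2 + a3 ^ 2) : ℂ) : HC) * v x +
        (Complex.I : HC) * (quat 0 (pd 0 a1 x) (pd 1 a1 x) (pd 2 a1 x) * v x) = 0)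
    (hweq : ∀ x ∈ Ω,
      -lapq w x - ((-(a1 x ^ 2 + a2 ^ 2 + a3 ^ 2) : ℂ) : HC) * w x -
        (Complex.I : HC) * (quat 0 (pd 0 a1 x) (pd 1 a1 x) (pd 2 a1 x) * w x) = 0) :
    (let α : (Fin 3 → ℝ) → HC := fun y => quat 0 (a1 y) a2 a3
     let u : (Fin 3 → ℝ) → HC := fun y =>
       (2⁻¹ : ℂ) • (v y * (1 + (Complex.I : HC) * e1)) +
       (2⁻¹ : ℂ) • (w y * (1 - (Complex.I : HC) * e1))
     let f : (Fin 3 → ℝ) → HC := fun y => Dq u y - u y * α y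
     ∀ x ∈ Ω, Dq f x + f x * α x = 0) := by
  intro _ _ _ x hx
  exact solutions_from_quaternionic_schroedinger_general
    ((ha1.contDiffAt (hΩ.mem_nhds hx)).differentiableAt one_ne_zero) (hv.qTwiceDiffAt hΩ hx)
    (hw.qTwiceDiffAt hΩ hx) (hveq x hx) (hweq x hx)
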